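/- Let u^n, u : [0,1] → ℝ be uniformly bounded measurable functions with u^n → u weakly in L¹(0,1) (i.e., ∫ φ u^n → ∫ φ u for all bounded measurable φ). Let g : ℝᵈ → ℝᵈ be bounded and Lipschitz, and let x^n, x solve x'(t) = u^n(t) g(x^n(t)), x'(t) = u(t) g(x(t)) with x^n(0) = x(0) = x₀. Then x^n(1) → x(1). -/

import Mathlib

open MeasureTheory Set Filter Topology

lemma aux_ae_le (u : ℕ → ℝ → ℝ) (ulim : ℝ → ℝ) (M : ℝ)
    (hmeas : ∀ n, Measurable (u n)) (hmeas' : Measurable ulim)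
    (hbdd : ∀ n t, |u n t| ≤ M)
    (hweak : ∀ φ : ℝ → ℝ, Measurable φ → (∃ C, ∀ t, |φ t| ≤ C) →
      Filter.Tendsto (fun n => ∫ t in Set.Icc (0:ℝ) 1, φ t * u n t)
        Filter.atTop (nhds (∫ t in Set.Icc (0:ℝ) 1, φ t * ulim t))) :
    ∀ᵐ t ∂(volume.restrict (Icc (0:ℝ) 1)), ulim t ≤ M := by
  set μ := volume.restrict (Icc (0:ℝ) 1) with hμ
  have key : ∀ k : ℕ, ∀ᵐ t ∂μ, ¬ (M < ulim t ∧ ulim t ≤ k) := by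
    intro k
    set A : Set ℝ := {t | M < ulim t ∧ ulim t ≤ k} with hA
    have hAm : MeasurableSet A :=
      (measurableSet_lt measurable_const hmeas').inter (measurableSet_le hmeas' measurable_const)
    have hM0 : 0 ≤ M := (abs_nonneg _).trans (hbdd 0 0)
    have hw := hweak (A.indicator (fun _ => 1)) (measurable_const.indicator hAm)
      ⟨1, fun t => by by_cases h : t ∈ A <;> simp [h]⟩
    have hconv : ∀ f : ℝ → ℝ, (∫ t, A.indicator (fun _ => (1:ℝ)) t * f t ∂μ) = ∫ t in A, f t ∂μ := by
      intro f
      rw [← integral_indicator hAm]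
      congr 1
      ext t
      by_cases h : t ∈ A <;> simp [h]
    simp only [hconv] at hw
    have hun : ∀ n, ∫ t in A, u n t ∂μ ≤ ∫ t in A, M ∂μ := by
      intro n
      apply integral_mono
      · exact Integrable.of_bound (hmeas n).aestronglyMeasurable M (ae_of_all _ (hbdd n))
      · exact integrable_const _
      · exact fun t => (abs_le.1 (hbdd n t)).2
    have hlim := le_of_tendsto' hw hun
    have hint : IntegrableOn ulim A μ := by
      refine Integrable.of_bound hmeas'.aestronglyMeasurable k ?_
      filter_upwards [ae_restrict_mem hAm] with t ht
      rw [Real.norm_eq_abs, abs_le]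
      constructor <;> linarith [ht.1, ht.2]
    have h0 : ∫ t in A, (ulim t - M) ∂μ ≤ 0 := by
      rw [integral_sub hint (integrable_const _)]; linarith
    have hnn : 0 ≤ᵐ[μ.restrict A] fun t => ulim t - M := by
      filter_upwards [ae_restrict_mem hAm] with t ht
      simpa using ht.1.le
    have h1 : ∫ t in A, (ulim t - M) ∂μ = 0 := le_antisymm h0 (integral_nonneg_of_ae hnn)
    rw [integral_eq_zero_iff_of_nonneg_ae hnn (hint.sub (integrable_const _))] at h1
    have h2 := (ae_restrict_iff' hAm).1 h1
    filter_upwards [h2] with t ht hc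
    have := ht hc
    simp at this
    linarith [hc.1]
  filter_upwards [ae_all_iff.2 key] with t ht
  by_contra hc
  push Not at hc
  obtain ⟨k, hk⟩ := exists_nat_ge (ulim t)
  exact ht k ⟨hc, hk⟩

lemma aux_gronwall (w e : ℝ → ℝ) (K : ℝ) (hK : 0 ≤ K)
    (hw : ContinuousOn w (Icc 0 1)) (he : ContinuousOn e (Icc 0 1))
    (he0 : ∀ t ∈ Icc (0:ℝ) 1, 0 ≤ e t)
    (h : ∀ t ∈ Icc (0:ℝ) 1, w t ≤ e t + K * ∫ s in (0:ℝ)..t, w s) :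
    w 1 ≤ e 1 + K * (Real.exp K * ∫ s in (0:ℝ)..1, e s) := by
  have hder : ∀ f : ℝ → ℝ, ContinuousOn f (Icc 0 1) → ∀ t ∈ Ioo (0:ℝ) 1,
      HasDerivAt (fun t => ∫ s in (0:ℝ)..t, f s) (f t) t := by
    intro f hf t ht
    have hn : Icc (0:ℝ) 1 ∈ 𝓝 t := Icc_mem_nhds ht.1 ht.2
    apply intervalIntegral.integral_hasDerivAt_right
    · apply ContinuousOn.intervalIntegrable
      rw [uIcc_of_le ht.1.le]
      exact hf.mono (Icc_subset_Icc le_rfl ht.2.le)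
    · exact ⟨Icc 0 1, hn, hf.aestronglyMeasurable measurableSet_Icc⟩
    · exact hf.continuousAt hn
  have hcont : ∀ f : ℝ → ℝ, ContinuousOn f (Icc 0 1) →
      ContinuousOn (fun t => ∫ s in (0:ℝ)..t, f s) (Icc 0 1) := by
    intro f hf
    have := intervalIntegral.continuousOn_primitive_interval (μ := volume) (f := f) (a := 0) (b := 1)
      (by rw [uIcc_of_le zero_le_one]; exact hf.integrableOn_Icc)
    rwa [uIcc_of_le zero_le_one] at this
  have hder' : ∀ t ∈ Ioo (0:ℝ) 1, HasDerivAt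
      (fun t => Real.exp (-K * t) * (∫ s in (0:ℝ)..t, w s) - ∫ s in (0:ℝ)..t, e s)
      ((Real.exp (-K * t) * (-K)) * (∫ s in (0:ℝ)..t, w s) + Real.exp (-K * t) * w t - e t) t := by
    intro t ht
    have h1 : HasDerivAt (fun t : ℝ => Real.exp (-K * t)) (Real.exp (-K * t) * (-K)) t := by
      simpa using ((hasDerivAt_id t).const_mul (-K)).exp
    exact (h1.mul (hder w hw t ht)).sub (hder e he t ht)
  have hanti : AntitoneOn (fun t => Real.exp (-K * t) * (∫ s in (0:ℝ)..t, w s) - ∫ s in (0:ℝ)..t, e s)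
      (Icc (0:ℝ) 1) := by
    apply antitoneOn_of_deriv_nonpos (convex_Icc 0 1)
    · exact ((by fun_prop : Continuous fun t : ℝ => Real.exp (-K * t)).continuousOn.mul
        (hcont w hw)).sub (hcont e he)
    · rw [interior_Icc]
      exact fun t ht => (hder' t ht).differentiableAt.differentiableWithinAt
    · rw [interior_Icc]
      intro t ht
      rw [(hder' t ht).deriv]
      have ht' := Ioo_subset_Icc_self ht
      have h1 := h t ht'
      have h2 := he0 t ht'
      have h3 : Real.exp (-K * t) ≤ 1 := Real.exp_le_one_iff.2 (by nlinarith [ht.1])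
      have h4 := Real.exp_pos (-K * t)
      have h5 := mul_le_mul_of_nonneg_left h1 h4.le
      have h6 := mul_le_mul_of_nonneg_right h3 h2
      linarith
  have hfin := hanti (left_mem_Icc.2 zero_le_one) (right_mem_Icc.2 zero_le_one) zero_le_one
  simp only [intervalIntegral.integral_same, mul_zero, sub_zero, mul_one, sub_nonpos] at hfin
  have h1 := h 1 (right_mem_Icc.2 zero_le_one)
  have h2 : (∫ s in (0:ℝ)..1, w s) ≤ Real.exp K * ∫ s in (0:ℝ)..1, e s := by
    have := mul_le_mul_of_nonneg_left hfin (Real.exp_pos K).le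
    rwa [← mul_assoc, ← Real.exp_add, add_neg_cancel, Real.exp_zero, one_mul] at this
  have := mul_le_mul_of_nonneg_left h2 hK
  linarith

theorem stmt_14 (d : ℕ) (u : ℕ → ℝ → ℝ) (ulim : ℝ → ℝ)
    (hmeas : ∀ n, Measurable (u n)) (hmeas' : Measurable ulim)
    (hbdd : ∃ M : ℝ, ∀ n t, |u n t| ≤ M)
    (hweak : ∀ φ : ℝ → ℝ, Measurable φ → (∃ C, ∀ t, |φ t| ≤ C) →
      Filter.Tendsto (fun n => ∫ t in Set.Icc (0:ℝ) 1, φ t * u n t)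
        Filter.atTop (nhds (∫ t in Set.Icc (0:ℝ) 1, φ t * ulim t)))
    (g : EuclideanSpace ℝ (Fin d) → EuclideanSpace ℝ (Fin d))
    (Lg : NNReal) (hgLip : LipschitzWith Lg g) (hgbdd : ∃ Mg : ℝ, ∀ z, ‖g z‖ ≤ Mg)
    (xn : ℕ → ℝ → EuclideanSpace ℝ (Fin d)) (x : ℝ → EuclideanSpace ℝ (Fin d))
    (x₀ : EuclideanSpace ℝ (Fin d))
    (hxn : ∀ n, ∀ t ∈ Set.Icc (0:ℝ) 1, HasDerivAt (xn n) (u n t • g (xn n t)) t)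
    (hx : ∀ t ∈ Set.Icc (0:ℝ) 1, HasDerivAt x (ulim t • g (x t)) t)
    (hinit : (∀ n, xn n 0 = x₀) ∧ x 0 = x₀) :
    Filter.Tendsto (fun n => xn n 1) Filter.atTop (nhds (x 1)) := by
  obtain ⟨M, hM⟩ := hbdd
  obtain ⟨Mg, hMg⟩ := hgbdd
  have hM0 : 0 ≤ M := (abs_nonneg _).trans (hM 0 0)
  have hMg0 : 0 ≤ Mg := (norm_nonneg _).trans (hMg 0)
  have hub : ∀ᵐ t ∂(volume.restrict (Icc (0:ℝ) 1)), |ulim t| ≤ M := by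
    have h1 := aux_ae_le u ulim M hmeas hmeas' hM hweak
    have h2 := aux_ae_le (fun n t => - u n t) (fun t => - ulim t) M (fun n => (hmeas n).neg)
      hmeas'.neg (fun n t => by simpa using hM n t) (by
        intro φ hφ hb
        simpa only [mul_neg, integral_neg] using (hweak φ hφ hb).neg)
    filter_upwards [h1, h2] with t h1 h2
    exact abs_le.2 ⟨by linarith, h1⟩
  have hubn : ∀ n, ∀ᵐ t ∂(volume.restrict (Icc (0:ℝ) 1)), |u n t| ≤ M :=
    fun n => ae_of_all _ (hM n)
  have hxc : ContinuousOn x (Icc 0 1) := fun t ht => (hx t ht).continuousAt.continuousWithinAt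
  have hxnc : ∀ n, ContinuousOn (xn n) (Icc 0 1) :=
    fun n t ht => (hxn n t ht).continuousAt.continuousWithinAt
  -- integrability of products
  have hI : ∀ (v : ℝ → ℝ), Measurable v →
      (∀ᵐ t ∂(volume.restrict (Icc (0:ℝ) 1)), |v t| ≤ M) →
      ∀ f : ℝ → EuclideanSpace ℝ (Fin d), ContinuousOn f (Icc 0 1) →
      IntegrableOn (fun t => v t • f t) (Icc 0 1) := by
    intro v hv hvb f hf
    exact hf.integrableOn_Icc.bdd_smul M hv.aestronglyMeasurable hvb
  have hII : ∀ f : ℝ → EuclideanSpace ℝ (Fin d), IntegrableOn f (Icc 0 1) →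
      ∀ t ∈ Icc (0:ℝ) 1, IntervalIntegrable f volume 0 t := by
    intro f hf t ht
    rw [intervalIntegrable_iff_integrableOn_Icc_of_le ht.1]
    exact hf.mono_set (Icc_subset_Icc le_rfl ht.2)
  have hgx : ContinuousOn (fun t => g (x t)) (Icc 0 1) := hgLip.continuous.comp_continuousOn hxc
  have hgxn : ∀ n, ContinuousOn (fun t => g (xn n t)) (Icc 0 1) :=
    fun n => hgLip.continuous.comp_continuousOn (hxnc n)
  have hFTC : ∀ (v : ℝ → ℝ), Measurable v →
      (∀ᵐ t ∂(volume.restrict (Icc (0:ℝ) 1)), |v t| ≤ M) →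
      ∀ z : ℝ → EuclideanSpace ℝ (Fin d),
      (∀ t ∈ Icc (0:ℝ) 1, HasDerivAt z (v t • g (z t)) t) → z 0 = x₀ →
      ∀ t ∈ Icc (0:ℝ) 1, z t = x₀ + ∫ s in (0:ℝ)..t, v s • g (z s) := by
    intro v hv hvb z hz hz0 t ht
    have hzc : ContinuousOn (fun t => g (z t)) (Icc 0 1) :=
      hgLip.continuous.comp_continuousOn
        (fun t ht => (hz t ht).continuousAt.continuousWithinAt)
    rw [intervalIntegral.integral_eq_sub_of_hasDerivAt (f := z) _
      (hII _ (hI v hv hvb _ hzc) t ht), hz0]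
    · abel
    · intro s hs
      rw [uIcc_of_le ht.1] at hs
      exact hz s ⟨hs.1, hs.2.trans ht.2⟩
  -- error term
  set D : ℕ → ℝ → EuclideanSpace ℝ (Fin d) :=
    fun n t => ∫ s in (0:ℝ)..t, (u n s • g (x s) - ulim s • g (x s)) with hD
  have hDint : ∀ n, IntegrableOn (fun s => u n s • g (x s) - ulim s • g (x s)) (Icc 0 1) :=
    fun n => (hI _ (hmeas n) (hubn n) _ hgx).sub (hI _ hmeas' hub _ hgx)
  have hDc : ∀ n, ContinuousOn (D n) (Icc 0 1) := by
    intro n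
    have := intervalIntegral.continuousOn_primitive_interval (μ := volume)
      (f := fun s => u n s • g (x s) - ulim s • g (x s)) (a := 0) (b := 1)
      (by rw [uIcc_of_le zero_le_one]; exact hDint n)
    rwa [uIcc_of_le zero_le_one] at this
  have hDlim : ∀ t ∈ Icc (0:ℝ) 1, Tendsto (fun n => D n t) atTop (𝓝 0) := by
    intro t ht
    have hv : ∀ (v : ℝ → ℝ), Measurable v →
      (∀ᵐ t ∂(volume.restrict (Icc (0:ℝ) 1)), |v t| ≤ M) → ∀ i : Fin d,
      (∫ s in (0:ℝ)..t, v s • g (x s)) i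
        = ∫ s in Icc (0:ℝ) 1, (Icc (0:ℝ) t).indicator (fun s => g (x s) i) s * v s := by
      intro v hv hvb i
      have h1 := (EuclideanSpace.proj i : EuclideanSpace ℝ (Fin d) →L[ℝ] ℝ).intervalIntegral_comp_comm
        (hII _ (hI v hv hvb _ hgx) t ht)
      have h2 : (∫ s in (0:ℝ)..t, v s • g (x s)) i = ∫ s in (0:ℝ)..t, v s * g (x s) i := by
        simpa using h1.symm
      rw [h2, intervalIntegral.integral_of_le ht.1, ← integral_Icc_eq_integral_Ioc]
      have h3 : ∀ s, (Icc (0:ℝ) t).indicator (fun s => g (x s) i) s * v s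
          = (Icc (0:ℝ) t).indicator (fun s => v s * g (x s) i) s := by
        intro s
        by_cases h : s ∈ Icc (0:ℝ) t
        · rw [indicator_of_mem h, indicator_of_mem h, mul_comm]
        · rw [indicator_of_notMem h, indicator_of_notMem h, zero_mul]
      simp only [h3]
      rw [setIntegral_indicator measurableSet_Icc,
        inter_eq_self_of_subset_right (Icc_subset_Icc le_rfl ht.2)]
    have hcomp : ∀ i : Fin d, Tendsto (fun n => (∫ s in (0:ℝ)..t, u n s • g (x s)) i) atTop
        (𝓝 ((∫ s in (0:ℝ)..t, ulim s • g (x s)) i)) := by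
      intro i
      rw [hv _ hmeas' hub]
      simp only [hv _ (hmeas _) (hubn _)]
      apply hweak
      · have hc : ContinuousOn (fun s => g (x s) i) (Icc 0 t) :=
          (EuclideanSpace.proj i : EuclideanSpace ℝ (Fin d) →L[ℝ] ℝ).continuous.comp_continuousOn
            (hgx.mono (Icc_subset_Icc le_rfl ht.2))
        classical
        have := hc.measurable_piecewise (continuousOn_const (c := (0:ℝ)) (s := (Icc 0 t)ᶜ))
          measurableSet_Icc
        rwa [← Set.piecewise_eq_indicator]
      · refine ⟨Mg, fun s => ?_⟩
        by_cases h : s ∈ Icc (0:ℝ) t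
        · rw [indicator_of_mem h]
          exact (PiLp.norm_apply_le (g (x s)) i).trans (hMg _)
        · rw [indicator_of_notMem h]; simpa using hMg0
    have htend : Tendsto (fun n => ∫ s in (0:ℝ)..t, u n s • g (x s)) atTop
        (𝓝 (∫ s in (0:ℝ)..t, ulim s • g (x s))) := by
      have h1 := (PiLp.continuous_toLp 2 (fun _ : Fin d => ℝ)).tendsto
        (WithLp.ofLp (∫ s in (0:ℝ)..t, ulim s • g (x s)))
      exact h1.comp (tendsto_pi_nhds.2 hcomp)
    have h0 := htend.sub_const (∫ s in (0:ℝ)..t, ulim s • g (x s))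
    rw [sub_self] at h0
    refine h0.congr fun n => ?_
    rw [hD]
    exact (intervalIntegral.integral_sub (hII _ (hI _ (hmeas n) (hubn n) _ hgx) t ht)
      (hII _ (hI _ hmeas' hub _ hgx) t ht)).symm
  have hDbd : ∀ n, ∀ t ∈ Icc (0:ℝ) 1, ‖D n t‖ ≤ 2 * M * Mg := by
    intro n t ht
    have h1 : ‖D n t‖ ≤ (2 * M * Mg) * |t - 0| := by
      apply intervalIntegral.norm_integral_le_of_norm_le_const_ae
      have := (ae_restrict_iff' measurableSet_Icc).1 hub
      filter_upwards [this] with s hs hst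
      rw [uIoc_of_le ht.1] at hst
      have hs' := hs ⟨hst.1.le, hst.2.trans ht.2⟩
      rw [← sub_smul, norm_smul]
      have : ‖u n s - ulim s‖ ≤ 2 * M := by
        refine (norm_sub_le _ _).trans ?_
        have := hM n s
        simp only [Real.norm_eq_abs]; linarith
      exact mul_le_mul this (hMg _) (norm_nonneg _) (by linarith)
    refine h1.trans ?_
    rw [sub_zero, abs_of_nonneg ht.1]
    exact mul_le_of_le_one_right (by positivity) ht.2
  have hineq : ∀ n, ∀ t ∈ Icc (0:ℝ) 1,
      ‖xn n t - x t‖ ≤ ‖D n t‖ + (M * Lg) * ∫ s in (0:ℝ)..t, ‖xn n s - x s‖ := by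
    intro n t ht
    have e1 := hFTC _ (hmeas n) (hubn n) (xn n) (hxn n) (hinit.1 n) t ht
    have e2 := hFTC _ hmeas' hub x hx hinit.2 t ht
    have i1 := hII _ (hI _ (hmeas n) (hubn n) _ (hgxn n)) t ht
    have i2 := hII _ (hI _ (hmeas n) (hubn n) _ hgx) t ht
    have i3 := hII _ (hI _ hmeas' hub _ hgx) t ht
    have e3 : xn n t - x t = D n t + ∫ s in (0:ℝ)..t, (u n s • g (xn n s) - u n s • g (x s)) := by
      rw [e1, e2]
      simp only [hD]
      rw [intervalIntegral.integral_sub i2 i3, intervalIntegral.integral_sub i1 i2]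
      abel
    rw [e3]
    refine (norm_add_le _ _).trans (add_le_add le_rfl ?_)
    rw [← intervalIntegral.integral_const_mul]
    apply intervalIntegral.norm_integral_le_of_norm_le ht.1
    · refine ae_of_all _ fun s _ => ?_
      rw [← smul_sub, norm_smul, mul_assoc]
      exact mul_le_mul (hM n s) (by simpa [dist_eq_norm] using hgLip.dist_le_mul (xn n s) (x s))
        (norm_nonneg _) hM0
    · apply ContinuousOn.intervalIntegrable
      rw [uIcc_of_le ht.1]
      exact (continuousOn_const.mul ((hxnc n).sub hxc).norm).mono (Icc_subset_Icc le_rfl ht.2)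
  have hfin : ∀ n, ‖xn n 1 - x 1‖ ≤ ‖D n 1‖ +
      (M * Lg) * (Real.exp (M * Lg) * ∫ s in (0:ℝ)..1, ‖D n s‖) := fun n =>
    aux_gronwall (fun t => ‖xn n t - x t‖) (fun t => ‖D n t‖) (M * Lg) (by positivity)
      ((hxnc n).sub hxc).norm (hDc n).norm (fun _ _ => norm_nonneg _) (hineq n)
  have hIlim : Tendsto (fun n => ∫ s in (0:ℝ)..1, ‖D n s‖) atTop (𝓝 0) := by
    have := intervalIntegral.tendsto_integral_filter_of_dominated_convergence
      (μ := volume) (a := 0) (b := 1) (l := atTop) (F := fun n s => ‖D n s‖)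
      (f := fun _ => (0:ℝ)) (fun _ => 2 * M * Mg)
      (Eventually.of_forall fun n => by
        rw [uIoc_of_le zero_le_one]
        exact ((hDc n).norm.mono Ioc_subset_Icc_self).aestronglyMeasurable measurableSet_Ioc)
      (Eventually.of_forall fun n => ae_of_all _ fun s hs => by
        rw [uIoc_of_le zero_le_one] at hs
        simpa using hDbd n s (Ioc_subset_Icc_self hs))
      intervalIntegrable_const
      (ae_of_all _ fun s hs => by
        rw [uIoc_of_le zero_le_one] at hs
        simpa using (hDlim s (Ioc_subset_Icc_self hs)).norm)
    simpa using this
  rw [tendsto_iff_norm_sub_tendsto_zero]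
  refine squeeze_zero (fun _ => norm_nonneg _) hfin ?_
  have h1 := (hDlim 1 (right_mem_Icc.2 zero_le_one)).norm
  have h2 := (hIlim.const_mul (Real.exp (M * Lg))).const_mul (M * Lg)
  simpa using h1.add h2
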